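/- arXiv:2403.01064 — 2 statements merged into one kernel-verified Lean document; each statement's English description precedes it below -/
import Mathlib

section
/- Let q ∈ ℂ with 0 < |q| < 1, let A : ℤ → ℂ be any sequence, and let x ∈ ℂ with x ≠ -q^{-m} for every m ∈ ℕ (so that (-x;q)_j ≠ 0 for all j). Assume the families (i,j) ↦ A_{i-j} q^{j(j-1)/2} x^j / ((q;q)_i (q;q)_j) and (i,j) ↦ A_{i-j} q^{j(j-1)/2 + ij} x^j / ((q;q)_i (q;q)_j (-x;q)_j), both indexed by ℕ×ℕ, are absolutely summable. Then ∑_{i,j≥0} A_{i-j} q^{j(j-1)/2} x^j / ((q;q)_i (q;q)_j) = (-x;q)_∞ · ∑_{i,j≥0} A_{i-j} q^{j(j-1)/2 + ij} x^j / ((q;q)_i (q;q)_j (-x;q)_j). -/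
/-- The finite q-shifted factorial `(a;q)_n = ∏_{k=0}^{n-1} (1 - a q^k)`. -/
noncomputable def qPoch (a q : ℂ) (n : ℕ) : ℂ := ∏ k ∈ Finset.range n, (1 - a * q ^ k)

/-- The infinite q-shifted factorial `(a;q)_∞ = ∏_{k=0}^{∞} (1 - a q^k)`. -/
noncomputable def qPochInf (a q : ℂ) : ℂ := ∏' k : ℕ, (1 - a * q ^ k)

noncomputable def rr (q : ℂ) (k : ℤ) : ℂ := if k < 0 then 0 else (qPoch q q k.toNat)⁻¹

lemma rr_neg (q : ℂ) {k : ℤ} (h : k < 0) : rr q k = 0 := by simp [rr, h]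

lemma rr_nat (q : ℂ) (k : ℕ) : rr q (k : ℤ) = (qPoch q q k)⁻¹ := by
  simp [rr]

lemma one_sub_ne {q : ℂ} (hq1 : ‖q‖ < 1) (k : ℕ) : 1 - q ^ (k + 1) ≠ 0 := by
  intro h
  have h2 : ‖q ^ (k + 1)‖ < 1 := by
    rw [norm_pow]; exact pow_lt_one₀ (norm_nonneg _) hq1 (by omega)
  rw [← sub_eq_zero.mp h] at h2
  simp at h2

lemma rr_nat_succ {q : ℂ} (hq1 : ‖q‖ < 1) (k : ℕ) :
    rr q (k : ℤ) = (1 - q ^ (k + 1)) * rr q ((k : ℤ) + 1) := by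
  have : ((k : ℤ) + 1) = ((k + 1 : ℕ) : ℤ) := by push_cast; rfl
  rw [this, rr_nat, rr_nat, qPoch, qPoch, Finset.prod_range_succ, mul_inv, ← pow_succ']
  have := one_sub_ne hq1 k
  field_simp

lemma rr_rec {q : ℂ} (hq1 : ‖q‖ < 1) (k : ℤ) :
    rr q k = (1 - q ^ (k + 1)) * rr q (k + 1) := by
  rcases lt_trichotomy k (-1) with h | h | h
  · rw [rr_neg q (by omega), rr_neg q (by omega)]; simp
  · subst h; simp [rr_neg]
  · obtain ⟨m, rfl⟩ := Int.eq_ofNat_of_zero_le (show 0 ≤ k by omega)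
    have := rr_nat_succ hq1 m
    exact_mod_cast this

lemma rr_norm {q : ℂ} (hq1 : ‖q‖ < 1) (k : ℕ) : ‖rr q (k : ℤ)‖ ≤ (1 - ‖q‖)⁻¹ ^ k := by
  rw [rr_nat, norm_inv, inv_pow, qPoch, norm_prod]
  have h0 : 0 < 1 - ‖q‖ := by linarith
  apply inv_anti₀ (by positivity)
  rw [← Finset.card_range k, ← Finset.prod_const, Finset.card_range]
  apply Finset.prod_le_prod
  · intros; exact h0.le
  · intro i _
    have : ‖q * q ^ i‖ ≤ ‖q‖ := by
      rw [norm_mul, norm_pow]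
      exact mul_le_of_le_one_right (norm_nonneg _) (pow_le_one₀ (norm_nonneg _) hq1.le)
    have h3 := norm_sub_norm_le (1 : ℂ) (q * q ^ i)
    rw [norm_one] at h3
    linarith

lemma tri_succ (k : ℕ) : (k + 1) * (k + 1 - 1) / 2 = k * (k - 1) / 2 + k := by
  have h1 := Finset.sum_range_id_mul_two (k + 1)
  have h2 := Finset.sum_range_id_mul_two k
  rw [Finset.sum_range_succ] at h1
  omega

lemma tri_add (j k : ℕ) :
    (j + k) * (j + k - 1) / 2 = j * (j - 1) / 2 + k * (k - 1) / 2 + j * k := by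
  induction k with
  | zero => simp
  | succ k ih => 
    rw [← add_assoc, tri_succ, ih, tri_succ]; ring

lemma vand {q : ℂ} (hq0 : q ≠ 0) (hq1 : ‖q‖ < 1) (N : ℕ) : ∀ n : ℤ,
    ∑ p ∈ Finset.HasAntidiagonal.antidiagonal N, q ^ ((p.1 : ℤ) * (p.1 + n)) * rr q (p.1 + n) * rr q p.1 * rr q p.2
      = rr q N * rr q (N + n) := by
  induction N with
  | zero => intro n; simp [rr, qPoch]
  | succ N ih =>
    intro n
    apply mul_left_cancel₀ (one_sub_ne hq1 N)
    have key : ∀ p ∈ Finset.HasAntidiagonal.antidiagonal (N + 1),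
      (1 - q ^ (N + 1)) * (q ^ ((p.1 : ℤ) * (p.1 + n)) * rr q (p.1 + n) * rr q p.1 * rr q p.2)
      = q ^ ((p.1 : ℤ) * (p.1 + n)) * rr q (p.1 + n) * rr q ((p.1 : ℤ) - 1) * rr q p.2
       + q ^ ((p.1 : ℤ) * (p.1 + n)) * q ^ p.1 * rr q (p.1 + n) * rr q p.1 * rr q ((p.2 : ℤ) - 1) := by
      intro p hp
      rw [Finset.HasAntidiagonal.mem_antidiagonal] at hp
      have e1 := rr_rec hq1 ((p.1 : ℤ) - 1)
      have e2 := rr_rec hq1 ((p.2 : ℤ) - 1)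
      simp only [sub_add_cancel, zpow_natCast] at e1 e2
      rw [e1, e2, ← hp, pow_add]
      ring
    rw [Finset.mul_sum, Finset.sum_congr rfl key, Finset.sum_add_distrib,
      Finset.Nat.sum_antidiagonal_succ, Finset.Nat.sum_antidiagonal_succ']
    simp only [Nat.cast_zero, zero_sub, rr_neg q (show (-1 : ℤ) < 0 by norm_num)]
    simp only [mul_zero, zero_mul, zero_add, add_zero, Nat.cast_add, Nat.cast_one, add_sub_cancel_right]
    rw [← Finset.sum_add_distrib, ← mul_assoc, ← rr_nat_succ hq1,
      show (N : ℤ) + 1 + n = N + (n + 1) by ring, ← ih]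
    apply Finset.sum_congr rfl
    intro p _
    rw [rr_rec hq1 ((p.1 : ℤ) + n)]
    have a1 : (p.1 : ℤ) + (n + 1) = p.1 + n + 1 := by ring
    have a2 : (p.1 : ℤ) + 1 + n = p.1 + n + 1 := by ring
    rw [a1, a2, show ((p.1 : ℤ) + 1) * (p.1 + n + 1) = p.1 * (p.1 + n) + p.1 + (p.1 + n + 1) by ring,
      show (p.1 : ℤ) * (p.1 + n + 1) = p.1 * (p.1 + n) + p.1 by ring,
      zpow_add₀ hq0 _ ((p.1 : ℤ) + n + 1), zpow_add₀ hq0 _ (p.1 : ℤ), zpow_natCast]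
    ring

lemma gauss_summable {a : ℝ} (ha0 : 0 < a) (ha : a < 1) (y : ℝ) (hy : 0 ≤ y) :
    Summable (fun k : ℕ => a ^ (k * (k - 1) / 2) * y ^ k) := by
  rcases hy.eq_or_lt with rfl | hy
  · apply summable_of_ne_finset_zero (s := {0})
    intro b hb
    simp at hb
    simp [hb]
  apply summable_of_ratio_test_tendsto_lt_one (l := 0) (by norm_num)
  · exact Filter.Eventually.of_forall fun k => by positivity
  · have : Filter.Tendsto (fun k : ℕ => a ^ k * y) Filter.atTop (nhds 0) := by
      simpa using (tendsto_pow_atTop_nhds_zero_of_lt_one ha0.le ha).mul_const y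
    refine this.congr fun k => ?_
    rw [Real.norm_of_nonneg (by positivity), Real.norm_of_nonneg (by positivity), tri_succ]
    field_simp
    ring

noncomputable def ee (q y : ℂ) (k : ℕ) : ℂ := q ^ (k * (k - 1) / 2) * y ^ k * rr q k

lemma ee_norm {q : ℂ} (hq1 : ‖q‖ < 1) (y : ℂ) (k : ℕ) :
    ‖ee q y k‖ ≤ ‖q‖ ^ (k * (k - 1) / 2) * (‖y‖ * (1 - ‖q‖)⁻¹) ^ k := by
  rw [ee, norm_mul, norm_mul, norm_pow, norm_pow, mul_pow, ← mul_assoc]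
  exact mul_le_mul_of_nonneg_left (rr_norm hq1 k) (by positivity)

lemma ee_summable {q : ℂ} (hq0 : 0 < ‖q‖) (hq1 : ‖q‖ < 1) (y : ℂ) : Summable (ee q y) := by
  have : 0 < 1 - ‖q‖ := by linarith
  exact Summable.of_norm_bounded (gauss_summable hq0 hq1 _ (by positivity)) (ee_norm hq1 y)

lemma ee_step {q : ℂ} (hq0 : 0 < ‖q‖) (hq1 : ‖q‖ < 1) (y : ℂ) :
    ∑' k, ee q y k = (1 + y) * ∑' k, ee q (y * q) k := by
  have s := ee_summable hq0 hq1 y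
  have s2 := ee_summable hq0 hq1 (y * q)
  have z1 : ee q y 0 = ee q (y * q) 0 := by simp [ee]
  suffices z2 : ∑' k, ee q y (k + 1) = ∑' k, ee q (y * q) (k + 1) + y * ∑' k, ee q (y * q) k by
    rw [add_mul, one_mul, s.tsum_eq_zero_add, z1, z2, ← add_assoc, ← s2.tsum_eq_zero_add]
  rw [← tsum_mul_left, ← Summable.tsum_add]
  · congr 1
    ext k
    simp only [ee, tri_succ]
    have := rr_nat_succ hq1 k
    push_cast
    rw [this]
    ring
  · exact (summable_nat_add_iff 1).mpr s2
  · exact s2.mul_left y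

lemma ee_iter {q : ℂ} (hq0 : 0 < ‖q‖) (hq1 : ‖q‖ < 1) (y : ℂ) (n : ℕ) :
    ∑' k, ee q y k = qPoch (-y) q n * ∑' k, ee q (y * q ^ n) k := by
  induction n with
  | zero => simp [qPoch]
  | succ n ih =>
    rw [ih, ee_step hq0 hq1, qPoch, qPoch, Finset.prod_range_succ, pow_succ]
    ring_nf

lemma euler {q : ℂ} (hq0 : 0 < ‖q‖) (hq1 : ‖q‖ < 1) (y : ℂ) :
    qPochInf (-y) q = ∑' k, ee q y k := by
  have hc : 0 < 1 - ‖q‖ := by linarith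
  have hm : Multipliable (fun k : ℕ => (1 - (-y) * q ^ k)) := by
    have : Summable (fun k : ℕ => ‖y * q ^ k‖) := by
      simp only [norm_mul, norm_pow]
      exact (summable_geometric_of_lt_one (norm_nonneg _) hq1).mul_left _
    simpa using multipliable_one_add_of_summable this
  have t1 := hm.hasProd.tendsto_prod_nat
  have t2 : Filter.Tendsto (fun n : ℕ => ∑' k, ee q (y * q ^ n) k) Filter.atTop (nhds (∑' k, ee q 0 k)) := by
    apply tendsto_tsum_of_dominated_convergence
      (gauss_summable hq0 hq1 (‖y‖ * (1 - ‖q‖)⁻¹) (by positivity))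
    · intro k
      have : Filter.Tendsto (fun n : ℕ => y * q ^ n) Filter.atTop (nhds 0) := by
        simpa using (tendsto_pow_atTop_nhds_zero_of_norm_lt_one hq1).const_mul y
      have c : Continuous (fun z => ee q z k) := by unfold ee; fun_prop
      exact (c.tendsto 0).comp this
    · refine Filter.Eventually.of_forall fun n k => (ee_norm hq1 _ k).trans ?_
      have : ‖y * q ^ n‖ ≤ ‖y‖ := by
        rw [norm_mul, norm_pow]
        exact mul_le_of_le_one_right (norm_nonneg _) (pow_le_one₀ (norm_nonneg _) hq1.le)
      gcongr
  have e0 : ∑' k, ee q 0 k = 1 := by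
    rw [tsum_eq_single 0]
    · simp [ee, rr, qPoch]
    · intro b hb; simp [ee, hb]
  have t3 := t1.mul t2
  rw [e0, mul_one] at t3
  refine tendsto_nhds_unique t3 ?_
  refine (tendsto_const_nhds).congr fun n => ee_iter hq0 hq1 y n

lemma rr_norm_int {q : ℂ} (hq0 : 0 < ‖q‖) (hq1 : ‖q‖ < 1) (n : ℤ) (j : ℕ) :
    ‖q ^ ((j : ℤ) * (j + n)) * rr q (j + n)‖ ≤ (1 - ‖q‖)⁻¹ ^ n.natAbs * (1 - ‖q‖)⁻¹ ^ j := by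
  have hc : 0 < 1 - ‖q‖ := by linarith
  rcases lt_or_ge ((j : ℤ) + n) 0 with h | h
  · rw [rr_neg q h, mul_zero, norm_zero]; positivity
  · obtain ⟨m, hm⟩ := Int.eq_ofNat_of_zero_le h
    have hC : 1 ≤ (1 - ‖q‖)⁻¹ := (one_le_inv₀ hc).mpr (by linarith [norm_nonneg q])
    rw [hm, ← Nat.cast_mul, zpow_natCast, norm_mul, norm_pow, ← pow_add]
    calc _ ≤ 1 * (1 - ‖q‖)⁻¹ ^ m := by
          gcongr
          · exact pow_le_one₀ (norm_nonneg _) hq1.le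
          · exact rr_norm hq1 m
      _ ≤ _ := by
          rw [one_mul]
          exact pow_le_pow_right₀ hC (by omega)

lemma qPoch_ne {q : ℂ} (hq0 : q ≠ 0) (x : ℂ) (hx : ∀ m : ℕ, x ≠ -q ^ (-(m : ℤ))) (j : ℕ) :
    qPoch (-x) q j ≠ 0 := by
  rw [qPoch, Finset.prod_ne_zero_iff]
  intro m _ h
  apply hx m
  rw [zpow_neg, zpow_natCast]
  have : q ^ m ≠ 0 := pow_ne_zero _ hq0
  field_simp
  linear_combination h

lemma fiber {q : ℂ} (hq0 : 0 < ‖q‖) (hq1 : ‖q‖ < 1) (x : ℂ)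
    (hx : ∀ m : ℕ, x ≠ -q ^ (-(m : ℤ))) (n : ℤ) :
    ∑' j : ℕ, ee q x j * rr q (j + n) =
    qPochInf (-x) q * ∑' j : ℕ, ee q x j * (q ^ ((j : ℤ) * (j + n)) * rr q (j + n)) / qPoch (-x) q j := by
  have hc : 0 < 1 - ‖q‖ := by linarith
  have hq : q ≠ 0 := norm_pos_iff.mp hq0
  rw [← tsum_mul_left]
  have e1 : ∀ j : ℕ, qPochInf (-x) q * (ee q x j * (q ^ ((j : ℤ) * (j + n)) * rr q (j + n)) / qPoch (-x) q j)
     = ∑' k : ℕ, ee q x j * (q ^ ((j : ℤ) * (j + n)) * rr q (j + n)) * ee q (x * q ^ j) k := by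
    intro j
    rw [euler hq0 hq1, ee_iter hq0 hq1 x j, tsum_mul_left]
    have := qPoch_ne hq x hx j
    field_simp
  simp_rw [e1]
  have hs : Summable (fun p : ℕ × ℕ => ee q x p.1 * (q ^ ((p.1 : ℤ) * (p.1 + n)) * rr q (p.1 + n)) * ee q (x * q ^ p.1) p.2) := by
    have g1 := gauss_summable hq0 hq1 (‖x‖ * (1 - ‖q‖)⁻¹ * (1 - ‖q‖)⁻¹) (by positivity)
    have g2 := gauss_summable hq0 hq1 (‖x‖ * (1 - ‖q‖)⁻¹) (by positivity)
    have g3 := (g1.mul_of_nonneg g2 (fun _ => by positivity) (fun _ => by positivity)).mul_left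
      ((1 - ‖q‖)⁻¹ ^ n.natAbs)
    refine Summable.of_norm_bounded g3 ?_
    rintro ⟨j, k⟩
    have b1 := ee_norm hq1 x j
    have b2 := rr_norm_int hq0 hq1 n j
    have b3 : ‖ee q (x * q ^ j) k‖ ≤ ‖q‖ ^ (k * (k - 1) / 2) * (‖x‖ * (1 - ‖q‖)⁻¹) ^ k := by
      refine (ee_norm hq1 _ k).trans ?_
      have : ‖x * q ^ j‖ ≤ ‖x‖ := by
        rw [norm_mul, norm_pow]
        exact mul_le_of_le_one_right (norm_nonneg _) (pow_le_one₀ (norm_nonneg _) hq1.le)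
      gcongr
    dsimp only
    rw [norm_mul, norm_mul]
    calc _ ≤ (‖q‖ ^ (j * (j - 1) / 2) * (‖x‖ * (1 - ‖q‖)⁻¹) ^ j) *
          ((1 - ‖q‖)⁻¹ ^ n.natAbs * (1 - ‖q‖)⁻¹ ^ j) *
          (‖q‖ ^ (k * (k - 1) / 2) * (‖x‖ * (1 - ‖q‖)⁻¹) ^ k) := by
            gcongr
      _ = _ := by rw [mul_pow _ _ j]; ring
  rw [← hs.tsum_prod, ← (Finset.HasAntidiagonal.sigmaAntidiagonalEquivProd (A := ℕ)).tsum_eq (fun p : ℕ × ℕ => ee q x p.1 * (q ^ ((p.1 : ℤ) * (p.1 + n)) * rr q (p.1 + n)) * ee q (x * q ^ p.1) p.2)]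
  have hs' := (Finset.HasAntidiagonal.sigmaAntidiagonalEquivProd (A := ℕ)).summable_iff.mpr hs
  refine Eq.trans ?_ (Summable.tsum_sigma' (fun _ => (hasSum_fintype _).summable) hs').symm
  congr 1
  ext N
  rw [tsum_fintype]
  simp only [Function.comp_apply, Finset.HasAntidiagonal.sigmaAntidiagonalEquivProd_apply]
  rw [Finset.sum_coe_sort (Finset.HasAntidiagonal.antidiagonal N) (fun p : ℕ × ℕ => ee q x p.1 * (q ^ ((p.1 : ℤ) * (p.1 + n)) * rr q (p.1 + n)) * ee q (x * q ^ p.1) p.2)]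
  have v := vand hq hq1 N n
  rw [ee, mul_assoc, ← v, Finset.mul_sum]
  apply Finset.sum_congr rfl
  intro p hp
  rw [Finset.HasAntidiagonal.mem_antidiagonal] at hp
  rw [ee, ee, ← hp, tri_add, mul_pow, ← pow_mul, pow_add, pow_add, pow_add]
  ring

lemma reindex (f : ℕ × ℕ → ℂ) (g : ℤ × ℕ → ℂ) (hf : Summable (fun p => ‖f p‖))
    (hfg : ∀ i j : ℕ, f (i, j) = g ((i : ℤ) - j, j)) (hg : ∀ (n : ℤ) (j : ℕ), (j : ℤ) + n < 0 → g (n, j) = 0) :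
    ∑' p, f p = ∑' n : ℤ, ∑' j : ℕ, g (n, j) := by
  let e : ℕ × ℕ → ℤ × ℕ := fun p => ((p.1 : ℤ) - p.2, p.2)
  have he : Function.Injective e := by
    rintro ⟨a, b⟩ ⟨c, d⟩ h
    simp only [e, Prod.mk.injEq] at h
    ext <;> simp <;> omega
  have hfe : f = g ∘ e := by ext ⟨i, j⟩; exact hfg i j
  have h0 : ∀ p, p ∉ Set.range e → g p = 0 := by
    rintro ⟨n, j⟩ h
    apply hg
    by_contra hh
    apply h
    exact ⟨((j + n).toNat, j), by
      simp only [e, Prod.mk.injEq, and_true]; omega⟩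
  have hs : Summable g := by
    rw [← he.summable_iff h0, ← hfe]; exact hf.of_norm
  rw [← hs.tsum_prod, hfe]
  exact he.tsum_eq (by intro p hp; by_contra h; exact hp (h0 p h))

theorem stmt1 (q : ℂ) (hq0 : 0 < ‖q‖) (hq1 : ‖q‖ < 1)
    (A : ℤ → ℂ) (x : ℂ)
    (hx : ∀ m : ℕ, x ≠ -q ^ (-(m : ℤ)))
    (h1 : Summable (fun p : ℕ × ℕ => ‖A ((p.1 : ℤ) - (p.2 : ℤ)) *
      q ^ (p.2 * (p.2 - 1) / 2) * x ^ p.2 / (qPoch q q p.1 * qPoch q q p.2)‖))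
    (h2 : Summable (fun p : ℕ × ℕ => ‖A ((p.1 : ℤ) - (p.2 : ℤ)) *
      q ^ (p.2 * (p.2 - 1) / 2 + p.1 * p.2) * x ^ p.2 /
      (qPoch q q p.1 * qPoch q q p.2 * qPoch (-x) q p.2)‖)) :
    ∑' p : ℕ × ℕ, A ((p.1 : ℤ) - (p.2 : ℤ)) *
      q ^ (p.2 * (p.2 - 1) / 2) * x ^ p.2 / (qPoch q q p.1 * qPoch q q p.2)
    = qPochInf (-x) q * ∑' p : ℕ × ℕ, A ((p.1 : ℤ) - (p.2 : ℤ)) *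
      q ^ (p.2 * (p.2 - 1) / 2 + p.1 * p.2) * x ^ p.2 /
      (qPoch q q p.1 * qPoch q q p.2 * qPoch (-x) q p.2) := by
  have hq : q ≠ 0 := norm_pos_iff.mp hq0
  rw [reindex _ (fun p : ℤ × ℕ => A p.1 * (ee q x p.2 * rr q (p.2 + p.1))) h1 ?_ ?_,
    reindex _ (fun p : ℤ × ℕ => A p.1 * (ee q x p.2 * (q ^ ((p.2 : ℤ) * (p.2 + p.1)) *
      rr q (p.2 + p.1)) / qPoch (-x) q p.2)) h2 ?_ ?_, ← tsum_mul_left]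
  · congr 1
    ext n
    simp only
    rw [tsum_mul_left, tsum_mul_left, fiber hq0 hq1 x hx n]
    ring
  · intro i j
    simp only [add_sub_cancel, ee, rr_nat]
    rw [← Nat.cast_mul, zpow_natCast, pow_add, mul_comm j i]
    simp only [div_eq_mul_inv, mul_inv]
    ring
  · intro n j h
    simp [rr_neg q h]
  · intro i j
    simp only [add_sub_cancel, ee, rr_nat]
    simp only [div_eq_mul_inv, mul_inv]
    ring
  · intro n j h
    simp [rr_neg q h]
end

section
/- Let q ∈ ℂ with 0 < |q| < 1, and let x, y ∈ ℂ with y ≠ 0 and |x| < 1. Assume the family (i,j) ↦ τ(i-j) y^{i-j} x^j / ((q;q)_i (q;q)_j) indexed by ℕ×ℕ is absolutely summable. Then ∑_{i,j≥0} τ(i-j) y^{i-j} x^j / ((q;q)_i (q;q)_j) = (y;q)_∞ · (xq/y;q)_∞ / (x;q)_∞. -/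
/-- `τ(n) = (-1)^n q^{n(n-1)/2}` for `n : ℤ` (note `n(n-1)/2 ≥ 0` for all `n : ℤ`). -/
noncomputable def qTauZ (q : ℂ) (n : ℤ) : ℂ := (-1 : ℂ) ^ n * q ^ ((n * (n - 1)) / 2).toNat

open Filter Topology

lemma aux_mult (q : ℂ) (hq1 : ‖q‖ < 1) (a : ℂ) : Multipliable (fun k : ℕ => 1 - a * q ^ k) := by
  have h : Summable (fun k : ℕ => ‖-(a * q ^ k)‖) := by
    simp only [norm_neg, norm_mul, norm_pow]
    exact (summable_geometric_of_lt_one (norm_nonneg _) hq1).mul_left _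
  simpa [sub_eq_add_neg] using multipliable_one_add_of_summable h

lemma aux_tend (q : ℂ) (hq1 : ‖q‖ < 1) (a : ℂ) :
    Tendsto (fun n => qPoch a q n) atTop (𝓝 (qPochInf a q)) :=
  (aux_mult q hq1 a).hasProd.tendsto_prod_nat

lemma aux_one_sub_ne (q : ℂ) (hq1 : ‖q‖ < 1) (n : ℕ) : 1 - q ^ (n+1) ≠ 0 := by
  intro h
  have h2 : q ^ (n+1) = 1 := (sub_eq_zero.mp h).symm
  have h3 : ‖q‖ ^ (n+1) = 1 := by rw [← norm_pow, h2, norm_one]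
  have := pow_lt_one₀ (norm_nonneg q) hq1 (Nat.succ_ne_zero n)
  exact absurd h3 this.ne

lemma aux_qq_ne (q : ℂ) (hq1 : ‖q‖ < 1) (n : ℕ) : qPoch q q n ≠ 0 := by
  unfold qPoch
  refine Finset.prod_ne_zero_iff.mpr fun k _ => ?_
  rw [← pow_succ']
  exact aux_one_sub_ne q hq1 k

lemma aux_succ (a q : ℂ) (n : ℕ) : qPoch a q (n+1) = qPoch a q n * (1 - a * q ^ n) :=
  Finset.prod_range_succ _ _

lemma aux_summable (q : ℂ) (hq1 : ‖q‖ < 1) (c : ℕ → ℂ) (α a : ℂ)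
    (hc : ∀ n, c (n+1) * (1 - q ^ (n+1)) = c n * (α - a * q ^ n))
    (x : ℂ) (hx : ‖α * x‖ < 1) : Summable (fun n => c n * x ^ n) := by
  obtain ⟨r, hr1, hr2⟩ := exists_between hx
  have hqt : Tendsto (fun n : ℕ => q ^ n) atTop (𝓝 0) := tendsto_pow_atTop_nhds_zero_of_norm_lt_one hq1
  have ht : Tendsto (fun n : ℕ => ‖(α - a * q ^ n) / (1 - q ^ (n+1)) * x‖) atTop (𝓝 ‖α * x‖) := by
    have h1 := (tendsto_add_atTop_iff_nat 1).mpr hqt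
    have := ((((hqt.const_mul a).const_sub α).div (h1.const_sub 1) (by simp)).mul_const x).norm
    simpa using this
  refine summable_of_ratio_norm_eventually_le hr2 ?_
  filter_upwards [ht.eventually_le_const hr1] with n hn
  have e : c (n+1) * x ^ (n+1) = (α - a * q ^ n) / (1 - q ^ (n+1)) * x * (c n * x ^ n) := by
    have h := aux_one_sub_ne q hq1 n
    have : c (n+1) = c n * (α - a * q ^ n) / (1 - q ^ (n+1)) := by
      rw [eq_div_iff h, hc]
    rw [this]; ring
  rw [e, norm_mul]
  gcongr

lemma aux_main (q : ℂ) (hq1 : ‖q‖ < 1) (c : ℕ → ℂ) (α a : ℂ) (hc0 : c 0 = 1)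
    (hc : ∀ n, c (n+1) * (1 - q ^ (n+1)) = c n * (α - a * q ^ n))
    (x : ℂ) (hx : ‖α * x‖ < 1) :
    qPochInf (α * x) q * ∑' n, c n * x ^ n = qPochInf (a * x) q := by
  have hxk : ∀ k : ℕ, ‖α * (q ^ k * x)‖ < 1 := fun k => by
    have : ‖α * (q ^ k * x)‖ = ‖q‖ ^ k * ‖α * x‖ := by simp only [norm_mul, norm_pow]; ring
    rw [this]
    exact lt_of_le_of_lt (mul_le_of_le_one_left (norm_nonneg _)
      (pow_le_one₀ (norm_nonneg _) hq1.le)) hx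
  have fe : ∀ z, ‖α * z‖ < 1 → ‖α * (q * z)‖ < 1 → (1 - α * z) * ∑' n, c n * z ^ n
      = (1 - a * z) * ∑' n, c n * (q * z) ^ n := by
    intro z hz hqz
    have s1 := aux_summable q hq1 c α a hc z hz
    have s2 := aux_summable q hq1 c α a hc (q * z) hqz
    have e1 : ∑' n, c n * z ^ n - ∑' n, c n * (q * z) ^ n
        = α * z * ∑' n, c n * z ^ n - a * z * ∑' n, c n * (q * z) ^ n := by
      rw [← s1.tsum_sub s2, ← tsum_mul_left, ← tsum_mul_left,
        ← (s1.mul_left _).tsum_sub (s2.mul_left _), (s1.sub s2).tsum_eq_zero_add]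
      simp only [pow_zero, sub_self, zero_add]
      refine tsum_congr fun n => ?_
      have := hc n
      simp only [mul_pow]
      linear_combination z ^ (n+1) * this
    linear_combination e1
  have it : ∀ k, qPoch (α * x) q k * ∑' n, c n * x ^ n
      = qPoch (a * x) q k * ∑' n, c n * (q ^ k * x) ^ n := by
    intro k
    induction k with
    | zero => simp [qPoch]
    | succ k ih =>
      have h := fe (q ^ k * x) (hxk k) (by have := hxk (k+1); rwa [pow_succ', mul_assoc] at this)
      rw [aux_succ, aux_succ, pow_succ', mul_assoc q]
      linear_combination (1 - α * x * q ^ k) * ih + qPoch (a * x) q k * h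
  have lim : Tendsto (fun k : ℕ => ∑' n, c n * (q ^ k * x) ^ n) atTop (𝓝 1) := by
    have hs := (aux_summable q hq1 c α a hc x hx).norm
    have e : ∑' n, (if n = 0 then (1:ℂ) else 0) = 1 := by simp
    rw [← e]
    refine tendsto_tsum_of_dominated_convergence hs ?_ ?_
    · intro n
      rcases n with _ | n
      · simp [hc0]
      · have hqt : Tendsto (fun k : ℕ => q ^ k) atTop (𝓝 0) :=
          tendsto_pow_atTop_nhds_zero_of_norm_lt_one hq1
        have := ((hqt.mul_const x).pow (n+1)).const_mul (c (n+1))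
        simpa using this
    · refine Eventually.of_forall fun k n => ?_
      rw [mul_pow, norm_mul, norm_mul, norm_mul]
      gcongr
      refine mul_le_of_le_one_left (norm_nonneg _) ?_
      rw [norm_pow, norm_pow]
      exact pow_le_one₀ (by positivity) (pow_le_one₀ (norm_nonneg _) hq1.le)
  have l1 := (aux_tend q hq1 (α * x)).mul_const (∑' n, c n * x ^ n)
  have l2 := (aux_tend q hq1 (a * x)).mul lim
  rw [mul_one] at l2
  exact tendsto_nhds_unique (l1.congr it) l2

lemma aux_binom (q : ℂ) (hq1 : ‖q‖ < 1) (a x : ℂ) (hx : ‖x‖ < 1) :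
    qPochInf x q * ∑' n, qPoch a q n / qPoch q q n * x ^ n = qPochInf (a * x) q := by
  have := aux_main q hq1 (fun n => qPoch a q n / qPoch q q n) 1 a (by simp [qPoch]) (fun n => by
    have h1 := aux_qq_ne q hq1 n
    have h2 := aux_one_sub_ne q hq1 n
    simp only [aux_succ, ← pow_succ']
    field_simp) x (by simpa using hx)
  simpa using this

lemma aux_ne (q : ℂ) (hq1 : ‖q‖ < 1) (x : ℂ) (hx : ‖x‖ < 1) : qPochInf x q ≠ 0 := by
  have := aux_binom q hq1 0 x hx
  intro h
  rw [h] at this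
  simp [qPochInf] at this

lemma aux_euler (q : ℂ) (hq1 : ‖q‖ < 1) (z : ℂ) :
    ∑' n : ℕ, (-1) ^ n * q ^ (n.choose 2) / qPoch q q n * z ^ n = qPochInf z q := by
  have := aux_main q hq1 (fun n => (-1) ^ n * q ^ (n.choose 2) / qPoch q q n) 0 1 (by simp [qPoch])
    (fun n => by
    have h1 := aux_qq_ne q hq1 n
    have h2 := aux_one_sub_ne q hq1 n
    have h3 : (n+1).choose 2 = n + n.choose 2 := by
      rw [Nat.choose_succ_succ' n 1, Nat.choose_one_right]
    simp only [aux_succ, ← pow_succ', h3]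
    generalize 1 - q ^ (n+1) = d at *
    rw [pow_add q n]
    rw [pow_succ]
    field_simp
    ring) z (by simp)
  simpa [qPochInf] using this

lemma aux_shift (q : ℂ) (hq1 : ‖q‖ < 1) (z : ℂ) :
    qPochInf z q = (1 - z) * qPochInf (z * q) q := by
  have l1 := (tendsto_add_atTop_iff_nat 1).mpr (aux_tend q hq1 z)
  have l2 := (aux_tend q hq1 (z * q)).const_mul (1 - z)
  refine tendsto_nhds_unique l1 (l2.congr fun n => ?_)
  unfold qPoch
  rw [Finset.prod_range_succ', mul_comm]
  simp [pow_succ', mul_assoc]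

lemma aux_refl (q : ℂ) (hq0 : q ≠ 0) (hq1 : ‖q‖ < 1) (y : ℂ) (hy : y ≠ 0) (j : ℕ) :
    (-1) ^ j * q ^ ((j+1).choose 2) / y ^ j * qPochInf (y / q ^ j) q
      = qPochInf y q * qPoch (q / y) q j := by
  induction j with
  | zero => simp [qPoch]
  | succ j ih =>
    have h3 : (j+1+1).choose 2 = (j+1) + (j+1).choose 2 := by
      rw [Nat.choose_succ_succ' (j+1) 1, Nat.choose_one_right]
    have h4 : y / q ^ (j+1) * q = y / q ^ j := by
      rw [pow_succ]; field_simp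
    rw [aux_shift q hq1 (y / q ^ (j+1)), h4, aux_succ, ← mul_assoc, ← mul_assoc, ← ih, h3, pow_add q (j+1)]
    field_simp
    ring

lemma aux_tau (q : ℂ) (hq0 : q ≠ 0) (i j : ℕ) :
    qTauZ q ((i:ℤ) - j) = (-1) ^ i * q ^ (i.choose 2) * ((-1) ^ j * q ^ ((j+1).choose 2)) / (q ^ j) ^ i := by
  have key : ∀ n : ℤ, 2 * ((n * (n - 1)) / 2) = n * (n-1) := fun n =>
    Int.mul_ediv_cancel' (by have := (Int.even_mul_pred_self n); exact this.two_dvd)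
  have hc : ∀ n : ℕ, 2 * ((n.choose 2 : ℕ) : ℤ) = n * (n - 1) := fun n => by
    rw [Nat.choose_two_right]
    rcases n with _ | n
    · simp
    · have := key ((n:ℤ)+1)
      push_cast
      simpa using this
  have hn : (((i:ℤ) - j) * ((i:ℤ) - j - 1) / 2).toNat + j * i = i.choose 2 + (j+1).choose 2 := by
    have h0 : 0 ≤ ((i:ℤ) - j) * ((i:ℤ) - j - 1) := by
      rcases le_or_gt ((i:ℤ) - j) 0 with h | h
      · nlinarith
      · exact mul_nonneg h.le (by omega)
    zify
    rw [Int.toNat_of_nonneg (by omega)]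
    have h1 := key ((i:ℤ) - j)
    have h2 := hc i
    have h3 := hc (j+1)
    push_cast at h3
    have : (2:ℤ) ≠ 0 := by norm_num
    apply mul_left_cancel₀ this
    linear_combination h1 - h2 - h3
  unfold qTauZ
  rw [eq_div_iff (by positivity), ← pow_mul, mul_assoc, ← pow_add, hn, pow_add,
    zpow_sub₀ (by norm_num), zpow_natCast, zpow_natCast]
  have : ((-1:ℂ) ^ j)⁻¹ = (-1) ^ j := by rw [← inv_pow]; norm_num
  rw [div_eq_mul_inv, this]
  ring

theorem stmt8 (q : ℂ) (hq0 : 0 < ‖q‖) (hq1 : ‖q‖ < 1)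
    (x y : ℂ) (hy : y ≠ 0) (hx : ‖x‖ < 1)
    (h1 : Summable (fun p : ℕ × ℕ => ‖qTauZ q ((p.1 : ℤ) - (p.2 : ℤ)) *
      y ^ ((p.1 : ℤ) - (p.2 : ℤ)) * x ^ p.2 / (qPoch q q p.1 * qPoch q q p.2)‖)) :
    ∑' p : ℕ × ℕ, qTauZ q ((p.1 : ℤ) - (p.2 : ℤ)) *
      y ^ ((p.1 : ℤ) - (p.2 : ℤ)) * x ^ p.2 / (qPoch q q p.1 * qPoch q q p.2)
    = qPochInf y q * qPochInf (x * q / y) q / qPochInf x q := by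
  have hq : q ≠ 0 := norm_pos_iff.mp hq0
  have hs := h1.of_norm
  have hs2 := (Equiv.prodComm ℕ ℕ).summable_iff.mpr hs
  simp only [Function.comp_def] at hs2
  rw [← (Equiv.prodComm ℕ ℕ).tsum_eq, hs2.tsum_prod]
  simp only [Equiv.prodComm_apply, Prod.fst_swap, Prod.snd_swap]
  rw [eq_div_iff (aux_ne q hq1 x hx)]
  have hin : ∀ j : ℕ, ∑' i : ℕ, qTauZ q ((i : ℤ) - (j : ℤ)) *
      y ^ ((i : ℤ) - (j : ℤ)) * x ^ j / (qPoch q q i * qPoch q q j)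
      = qPochInf y q * (qPoch (q / y) q j / qPoch q q j * x ^ j) := by
    intro j
    have h := aux_refl q hq hq1 y hy j
    rw [← aux_euler q hq1 (y / q ^ j)] at h
    have e : qPochInf y q * (qPoch (q / y) q j / qPoch q q j * x ^ j)
        = (x ^ j / qPoch q q j) * (qPochInf y q * qPoch (q / y) q j) := by ring
    rw [e, ← h, ← tsum_mul_left, ← tsum_mul_left]
    refine tsum_congr fun i => ?_
    have n1 := aux_qq_ne q hq1 i
    have n2 := aux_qq_ne q hq1 j
    rw [aux_tau q hq, zpow_sub₀ hy, zpow_natCast, zpow_natCast, div_pow]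
    field_simp
  simp only [hin]
  have hb := aux_binom q hq1 (q / y) x hx
  have e : q / y * x = x * q / y := by ring
  rw [e] at hb
  rw [tsum_mul_left, ← hb]
  ring
end
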